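/- Let A ∈ ℝ^{n×n} be symmetric with nonnegative entries and H ∈ {0,1}^{n×k} a partition indicator matrix. Then the quotient Laplacian factorizes as a Laplacian of the quotient graph: H† (diag(A·1) − A) H = diag(A^π·1) − A^π, where A^π = H† A H. -/

import Mathlib

open Matrix BigOperators

/-!
By linearity only the degree terms have to be compared. Distinct columns of `H` have disjoint
supports, so `Hᵀ diag(d) H = diag(Hᵀ d)` for every vector `d`. The case `d = 1` shows that
`N = HᵀH` is diagonal, whence `H† diag(d) H = diag(H† d)`. As every row of `H` sums to one,
`H·1 = 1`, so `d = A·1` gives `H† d = H† A H·1 = A^π·1`.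
-/

section Laplacian

variable {V R : Type*} [Fintype V] [DecidableEq V] [NonAssocRing R]

/-- The Laplacian `diag(A·1) − A` of the weighted directed graph with adjacency matrix `A`; the
degree of a vertex is its row sum. -/
def laplacian (A : Matrix V V R) : Matrix V V R :=
  diagonal (A *ᵥ 1) - A

theorem laplacian_eq_diagonal_sum_sub (A : Matrix V V R) :
    laplacian A = diagonal (fun i => ∑ j, A i j) - A := by
  rw [laplacian]
  congr 2
  ext i
  simp only [mulVec, dotProduct, Pi.one_apply, mul_one]

end Laplacian

section PartitionIndicator

open scoped Finset

variable {V Q R : Type*} [DecidableEq Q]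

theorem card_fiber_ne_zero [Fintype V] {g : V → Q} (hg : Function.Surjective g) (q : Q) :
    #{v | g v = q} ≠ 0 := by
  obtain ⟨v, hv⟩ := hg q
  exact Finset.card_ne_zero_of_mem (by simpa using hv)

/-- The indicator matrix `H` of the partition of `V` into the fibres of `g : V → Q`: rows are
indexed by elements, columns by groups. -/
def partitionIndicator (R : Type*) [Zero R] [One R] (g : V → Q) : Matrix V Q R :=
  Matrix.of fun v q => if g v = q then 1 else 0

theorem partitionIndicator_mulVec_one [NonAssocSemiring R] [Fintype Q] (g : V → Q) :
    partitionIndicator R g *ᵥ 1 = 1 := by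
  ext v
  simp [partitionIndicator, mulVec, dotProduct]

theorem transpose_partitionIndicator_mul_diagonal_mul [NonAssocSemiring R] [Fintype V]
    [DecidableEq V] (g : V → Q) (d : V → R) :
    (partitionIndicator R g)ᵀ * diagonal d * partitionIndicator R g =
      diagonal ((partitionIndicator R g)ᵀ *ᵥ d) := by
  ext q r
  rw [mul_apply, diagonal_apply]
  simp only [mul_diagonal, mulVec, dotProduct, transpose_apply, partitionIndicator, of_apply]
  split_ifs with hqr
  · subst hqr
    exact Finset.sum_congr rfl fun v _ => by split_ifs <;> simp
  · refine Finset.sum_eq_zero fun v _ => ?_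
    by_cases hv : g v = q <;> simp [hv, hqr]

theorem transpose_partitionIndicator_mul_self [NonAssocSemiring R] [Fintype V] (g : V → Q) :
    (partitionIndicator R g)ᵀ * partitionIndicator R g =
      diagonal fun q => (#{v | g v = q} : R) := by
  classical
  calc (partitionIndicator R g)ᵀ * partitionIndicator R g
      = (partitionIndicator R g)ᵀ * diagonal 1 * partitionIndicator R g := by simp
    _ = diagonal ((partitionIndicator R g)ᵀ *ᵥ 1) :=
      transpose_partitionIndicator_mul_diagonal_mul g 1
    _ = diagonal fun q => (#{v | g v = q} : R) := by
      simp [partitionIndicator, mulVec, dotProduct]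

end PartitionIndicator

section Quotient

open scoped Finset

variable {V Q K : Type*} [Fintype V] [Fintype Q] [DecidableEq Q] [Field K]

/-- The pseudoinverse `H† = N⁻¹Hᵀ` of the partition indicator matrix `H`, where `N = HᵀH`. It is `0`
by convention when `N` is singular, that is, when some group size vanishes in `K`. -/
noncomputable def partitionPinv (K : Type*) [Field K] (g : V → Q) : Matrix Q V K :=
  ((partitionIndicator K g)ᵀ * partitionIndicator K g)⁻¹ * (partitionIndicator K g)ᵀ

/-- The quotient `A^π = H† A H` of a matrix by the partition into the fibres of `g`. -/
noncomputable def quotientMatrix (g : V → Q) (A : Matrix V V K) : Matrix Q Q K :=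
  partitionPinv K g * A * partitionIndicator K g

theorem partitionPinv_eq_diagonal_mul (g : V → Q) (hg : ∀ q, (#{v | g v = q} : K) ≠ 0) :
    partitionPinv K g =
      diagonal (fun q => (#{v | g v = q} : K)⁻¹) * (partitionIndicator K g)ᵀ := by
  rw [partitionPinv, transpose_partitionIndicator_mul_self]
  congr 1
  apply inv_eq_left_inv
  simp only [diagonal_mul_diagonal, inv_mul_cancel₀ (hg _), diagonal_one]

theorem quotientMatrix_mulVec_one (g : V → Q) (A : Matrix V V K) :
    quotientMatrix g A *ᵥ 1 = partitionPinv K g *ᵥ (A *ᵥ 1) := by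
  rw [quotientMatrix, ← mulVec_mulVec, partitionIndicator_mulVec_one, mulVec_mulVec]

variable [DecidableEq V]

theorem quotientMatrix_diagonal (g : V → Q) (hg : ∀ q, (#{v | g v = q} : K) ≠ 0) (d : V → K) :
    quotientMatrix g (diagonal d) = diagonal (partitionPinv K g *ᵥ d) := by
  let W : Matrix Q Q K := diagonal fun q => (#{v | g v = q} : K)⁻¹
  let H : Matrix V Q K := partitionIndicator K g
  have hpinv : partitionPinv K g = W * Hᵀ := partitionPinv_eq_diagonal_mul g hg
  calc quotientMatrix g (diagonal d)
      = W * (Hᵀ * diagonal d * H) := by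
        simp only [quotientMatrix, hpinv, H, Matrix.mul_assoc]
    _ = W * diagonal (Hᵀ *ᵥ d) := by
        rw [transpose_partitionIndicator_mul_diagonal_mul]
    _ = diagonal (W *ᵥ (Hᵀ *ᵥ d)) := by
        rw [diagonal_mul_diagonal]
        congr 1
        ext q
        rw [mulVec_diagonal]
    _ = diagonal (partitionPinv K g *ᵥ d) := by
        rw [hpinv, mulVec_mulVec]

theorem quotient_laplacian_eq_laplacian_of_quotient_general (g : V → Q)
    (hg : ∀ q, (#{v | g v = q} : K) ≠ 0) (A : Matrix V V K) :
    quotientMatrix g (laplacian A) = laplacian (quotientMatrix g A) :=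
  calc quotientMatrix g (laplacian A)
      = quotientMatrix g (diagonal (A *ᵥ 1)) - quotientMatrix g A := by
        simp only [quotientMatrix, laplacian, Matrix.mul_sub, Matrix.sub_mul]
    _ = diagonal (partitionPinv K g *ᵥ (A *ᵥ 1)) - quotientMatrix g A := by
        rw [quotientMatrix_diagonal g hg]
    _ = laplacian (quotientMatrix g A) := by
        rw [← quotientMatrix_mulVec_one, laplacian]

end Quotient

/-- The quotient Laplacian factorizes as the Laplacian of the quotient graph:
`H† (diag(A·1) − A) H = diag(A^π·1) − A^π` with `A^π = H† A H`. -/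
theorem quotient_laplacian_eq_laplacian_of_quotient
    {n k : ℕ} (g : Fin n → Fin k) (hg : Function.Surjective g)
    (H : Matrix (Fin n) (Fin k) ℝ)
    (hH : H = Matrix.of fun i j => if g i = j then (1 : ℝ) else 0)
    (Hdag : Matrix (Fin k) (Fin n) ℝ) (hHdag : Hdag = (Hᵀ * H)⁻¹ * Hᵀ)
    (A : Matrix (Fin n) (Fin n) ℝ) (hAsymm : A.IsSymm) (hAnn : ∀ i j, 0 ≤ A i j)
    (Api : Matrix (Fin k) (Fin k) ℝ) (hApi : Api = Hdag * A * H) :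
    Hdag * (Matrix.diagonal (fun i => ∑ j, A i j) - A) * H
      = Matrix.diagonal (fun r => ∑ s, Api r s) - Api := by
  subst hH hHdag hApi
  simpa only [laplacian_eq_diagonal_sum_sub, quotientMatrix, partitionPinv, partitionIndicator]
    using quotient_laplacian_eq_laplacian_of_quotient_general (K := ℝ) g
      (fun r => Nat.cast_ne_zero.mpr (card_fiber_ne_zero hg r)) A
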